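/- For correlated Erdős–Rényi random graphs (G_a, G_b), the normalized quantity (1/C(n,2)) log(1/max_{π ∈ S_n} P_{G_a,G_b}(G_a, π(G_b))) converges to H(A,B) in probability as n → ∞. -/

import Mathlib

open Finset Filter

namespace GraphSI

/-- A (weighted) graph on vertex set `Fin n` with marks in `α`, identified with the
function assigning a mark to each unordered pair of vertices. -/
abbrev Graph (n : ℕ) (α : Type*) := Sym2 (Fin n) → α

/-- Relabeling of the vertices of a graph by a permutation `π`:
the `(i,j)` entry of `π(g)` is the `(π⁻¹ i, π⁻¹ j)` entry of `g`. -/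
def relabel {n : ℕ} {α : Type*} (π : Equiv.Perm (Fin n)) (g : Graph n α) : Graph n α :=
  fun e => g (e.map π.symm)

/-- The unordered pairs `{i,j}` with `i ≠ j` (i.e. the pairs `i < j`). -/
def edgePairs (n : ℕ) : Finset (Sym2 (Fin n)) :=
  Finset.univ.filter (fun e => ¬ e.IsDiag)

/-- Joint probability of a pair of graphs under the correlated Erdős–Rényi model with
per-edge joint mark distribution `P`. -/
def cer {n : ℕ} {α β : Type*} (P : α × β → ℝ) (ga : Graph n α) (gb : Graph n β) : ℝ :=
  ∏ e ∈ edgePairs n, P (ga e, gb e)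

/-- Probability of a graph under the Erdős–Rényi model with i.i.d. edge marks `P`. -/
def erP {n : ℕ} {β : Type*} (P : β → ℝ) (g : Graph n β) : ℝ :=
  ∏ e ∈ edgePairs n, P (g e)

/-- Base-2 Shannon entropy of a pmf on a finite type (with the convention 0 log 0 = 0). -/
noncomputable def H2 {γ : Type*} [Fintype γ] (P : γ → ℝ) : ℝ :=
  ∑ x, P x * Real.logb 2 (P x)⁻¹

/-- Conditional entropy `H(A|B) = H(A,B) - H(B)` for a joint pmf on `α × β`. -/
noncomputable def condH {α β : Type*} [Fintype α] [Fintype β] (P : α × β → ℝ) : ℝ :=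
  H2 P - H2 (fun b => ∑ a, P (a, b))

/-- `C(n,2) = n(n-1)/2` as a real number. -/
def Cn2 (n : ℕ) : ℝ := n.choose 2

/-- Probability of an event under a pmf on a finite sample space. -/
noncomputable def prob {Ω : Type*} [Fintype Ω] (P : Ω → ℝ) (E : Set Ω) : ℝ :=
  ∑ ω, E.indicator P ω

/-- Maximum of a real-valued function over all permutations of `[n]`. -/
def maxPerm {n : ℕ} (f : Equiv.Perm (Fin n) → ℝ) : ℝ :=
  Finset.univ.sup' ⟨1, Finset.mem_univ 1⟩ f

/-- Exponential tilting: a negative mean gives an exponential moment below one. -/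
lemma exists_tilt {γ : Type*} [Fintype γ] (P Y : γ → ℝ) (hP1 : ∑ x, P x = 1)
    (hY : ∑ x, P x * Y x < 0) :
    ∃ s : ℝ, 0 < s ∧ ∑ x, P x * Real.exp (s * Y x) < 1 := by
  have hd : HasDerivAt (fun s : ℝ => ∑ x, P x * Real.exp (s * Y x)) (∑ x, P x * Y x) 0 := by
    have : HasDerivAt (fun s : ℝ => ∑ x, P x * Real.exp (s * Y x))
        (∑ x, P x * (Real.exp (0 * Y x) * (1 * Y x))) 0 := by
      refine HasDerivAt.fun_sum fun x _ => ?_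
      exact (((hasDerivAt_id (0:ℝ)).mul_const (Y x)).exp).const_mul (P x)
    simpa using this
  have h1 := hd.tendsto_slope_zero_right
  have h2 := h1.eventually (gt_mem_nhds hY)
  have h3 : ∀ᶠ t : ℝ in nhdsWithin 0 (Set.Ioi 0), 0 < t := self_mem_nhdsWithin
  obtain ⟨t, ht, ht0⟩ := (h2.and h3).exists
  refine ⟨t, ht0, ?_⟩
  simp only [zero_add, smul_eq_mul, zero_mul, Real.exp_zero, mul_one, hP1] at ht
  by_contra hcon
  push Not at hcon
  have : 0 ≤ t⁻¹ * (∑ x, P x * Real.exp (t * Y x) - 1) :=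
    mul_nonneg (inv_nonneg.2 ht0.le) (by linarith)
  linarith

lemma sum_prod_subset {ι γ : Type*} [Fintype ι] [DecidableEq ι] [Fintype γ]
    (E : Finset ι) (f : γ → ℝ) :
    ∑ x : ι → γ, ∏ e ∈ E, f (x e) = (∑ c, f c) ^ E.card * (Fintype.card γ : ℝ) ^ Eᶜ.card := by
  have h1 : ∀ x : ι → γ, ∏ e ∈ E, f (x e) = ∏ e, (if e ∈ E then f (x e) else 1) := by
    intro x; rw [Finset.prod_ite_mem]; simp
  simp_rw [h1]
  rw [← Fintype.prod_sum (fun e c => if e ∈ E then f c else (1:ℝ)),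
    ← Finset.prod_mul_prod_compl E]
  congr 1
  · rw [Finset.prod_congr rfl (g := fun _ => ∑ c, f c), Finset.prod_const]
    intro e he; simp [he]
  · rw [Finset.prod_congr rfl (g := fun _ => (Fintype.card γ : ℝ)), Finset.prod_const]
    intro e he
    have : e ∉ E := by simpa using he
    simp [this]

lemma card_edgePairs (n : ℕ) : (edgePairs n).card = n.choose 2 := by
  have := Sym2.card_subtype_not_diag (α := Fin n)
  rw [Fintype.card_subtype] at this
  simpa [edgePairs] using this

lemma card_edgePairs_compl (n : ℕ) : (edgePairs n)ᶜ.card = n := by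
  have := Sym2.card_subtype_diag (α := Fin n)
  rw [Fintype.card_subtype] at this
  simpa [edgePairs, Finset.compl_filter] using this

lemma sum_cer {α β : Type*} [Fintype α] [Fintype β] (n : ℕ) (f : α × β → ℝ) :
    ∑ p : Graph n α × Graph n β, cer f p.1 p.2 =
      (∑ c, f c) ^ (n.choose 2) * (Fintype.card (α × β) : ℝ) ^ n := by
  have h := sum_prod_subset (edgePairs n) f
  rw [card_edgePairs, card_edgePairs_compl] at h
  rw [← h]
  exact (Fintype.sum_equiv (Equiv.arrowProdEquivProdArrow _ _ _) _ _ (fun x => rfl)).symm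

/-- Relabeling as a bijection. -/
def relabelEquiv {n : ℕ} {α : Type*} (π : Equiv.Perm (Fin n)) : Graph n α ≃ Graph n α where
  toFun := relabel π
  invFun := relabel π.symm
  left_inv g := by funext e; simp [relabel, Sym2.map_map]
  right_inv g := by funext e; simp [relabel, Sym2.map_map]

lemma sum_cer_relabel {α β : Type*} [Fintype α] [Fintype β] (n : ℕ) (f : α × β → ℝ)
    (π : Equiv.Perm (Fin n)) :
    ∑ p : Graph n α × Graph n β, cer f p.1 (relabel π p.2) =
      (∑ c, f c) ^ (n.choose 2) * (Fintype.card (α × β) : ℝ) ^ n := by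
  rw [← sum_cer]
  exact Fintype.sum_equiv (Equiv.prodCongr (Equiv.refl _) (relabelEquiv π)) _ _ (fun x => rfl)

lemma tendsto_aux (K : ℕ) (r : ℝ) (h0 : 0 ≤ r) (h1 : r < 1) :
    Tendsto (fun n : ℕ => (K : ℝ) ^ n * (n.factorial : ℝ) * r ^ (n.choose 2)) atTop (nhds 0) := by
  set q := Real.sqrt r with hq
  have hq0 : 0 ≤ q := Real.sqrt_nonneg _
  have hq1 : q < 1 := by rw [hq, Real.sqrt_lt' one_pos]; simpa using h1
  have hqr : q ^ 2 = r := Real.sq_sqrt h0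
  have ha : Tendsto (fun n : ℕ => (K : ℝ) * n * q ^ (n - 1)) atTop (nhds 0) := by
    rw [← tendsto_add_atTop_iff_nat 1]
    have e1 := tendsto_self_mul_const_pow_of_lt_one hq0 hq1
    have e2 := tendsto_pow_atTop_nhds_zero_of_lt_one hq0 hq1
    have := (e1.add e2).const_mul (K : ℝ)
    simp only [add_zero, mul_zero] at this
    refine this.congr fun n => ?_
    push_cast
    ring
  refine squeeze_zero' (Eventually.of_forall fun n => by positivity) ?_ ha
  filter_upwards [ha.eventually (gt_mem_nhds one_pos), eventually_ge_atTop 1] with n hn hn1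
  have hr : r ^ (n.choose 2) = (q ^ (n - 1)) ^ n := by
    rw [← hqr, ← pow_mul, ← pow_mul]
    congr 1
    rw [Nat.choose_two_right, Nat.mul_div_cancel' (Nat.even_mul_pred_self n).two_dvd, mul_comm]
  have hf : (n.factorial : ℝ) ≤ (n : ℝ) ^ n := by exact_mod_cast Nat.factorial_le_pow n
  calc (K : ℝ) ^ n * (n.factorial : ℝ) * r ^ (n.choose 2)
      ≤ (K : ℝ) ^ n * (n : ℝ) ^ n * (q ^ (n - 1)) ^ n := by rw [hr]; gcongr
    _ = ((K : ℝ) * n * q ^ (n - 1)) ^ n := by rw [mul_pow, mul_pow]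
    _ ≤ (K : ℝ) * n * q ^ (n - 1) := pow_le_of_le_one (by positivity) hn.le (by omega)

lemma cer_tilt {n : ℕ} {α β : Type*} (P Y : α × β → ℝ) (s : ℝ)
    (ga : Graph n α) (gb : Graph n β) :
    cer (fun x => P x * Real.exp (s * Y x)) ga gb =
      cer P ga gb * Real.exp (s * ∑ e ∈ edgePairs n, Y (ga e, gb e)) := by
  unfold cer
  rw [Finset.prod_mul_distrib, Finset.mul_sum, Real.exp_sum]

lemma cer_nonneg {n : ℕ} {α β : Type*} {P : α × β → ℝ} (hP0 : ∀ x, 0 ≤ P x)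
    (ga : Graph n α) (gb : Graph n β) : 0 ≤ cer P ga gb :=
  Finset.prod_nonneg fun _ _ => hP0 _

lemma pointwise {n : ℕ} (hn : 2 ≤ n) {α β : Type*} [Fintype α] [Fintype β]
    (P : α × β → ℝ) (hP0 : ∀ x, 0 ≤ P x) (δ h s1 s2 : ℝ)
    (hh : h = H2 P * Real.log 2) (hs1 : 0 < s1) (hs2 : 0 < s2)
    (ga : Graph n α) (gb : Graph n β)
    (hbad : δ < |(Cn2 n)⁻¹ *
                  Real.logb 2 (maxPerm fun π => cer P ga (relabel π gb))⁻¹ - H2 P|) :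
    cer P ga gb ≤
      cer (fun x => P x * Real.exp (s1 * (-Real.log (P x) - h - δ * Real.log 2))) ga gb
      + cer (fun x => P x * Real.exp (s2 * (Real.log (P x) + h - δ * Real.log 2 / 2))) ga gb
      + Real.exp (-(δ * Real.log 2 / 2)) ^ (n.choose 2)
          * ∑ π : Equiv.Perm (Fin n), cer P ga (relabel π gb) := by
  have hl2 : 0 < Real.log 2 := Real.log_pos (by norm_num)
  have n1 : 0 ≤ cer (fun x => P x * Real.exp (s1 * (-Real.log (P x) - h - δ * Real.log 2))) ga gb :=
    cer_nonneg (fun x => mul_nonneg (hP0 x) (Real.exp_pos _).le) _ _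
  have n2 : 0 ≤ cer (fun x => P x * Real.exp (s2 * (Real.log (P x) + h - δ * Real.log 2 / 2))) ga gb :=
    cer_nonneg (fun x => mul_nonneg (hP0 x) (Real.exp_pos _).le) _ _
  have n3 : 0 ≤ Real.exp (-(δ * Real.log 2 / 2)) ^ (n.choose 2)
          * ∑ π : Equiv.Perm (Fin n), cer P ga (relabel π gb) :=
    mul_nonneg (by positivity) (Finset.sum_nonneg fun _ _ => cer_nonneg hP0 _ _)
  rcases (cer_nonneg hP0 ga gb).eq_or_lt with h0 | hpos
  · rw [← h0]; linarith
  have hNpos : (0:ℝ) < (n.choose 2 : ℕ) := by exact_mod_cast Nat.choose_pos hn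
  have hlogc : Real.log (cer P ga gb) = ∑ e ∈ edgePairs n, Real.log (P (ga e, gb e)) := by
    unfold cer
    refine Real.log_prod fun e he h0 => hpos.ne' ?_
    exact Finset.prod_eq_zero he h0
  have hr1 : relabel 1 gb = gb := by
    funext e
    have : (⇑(Equiv.symm (1 : Equiv.Perm (Fin n)))) = id := rfl
    simp [relabel, this]
  set m := maxPerm fun π => cer P ga (relabel π gb) with hm
  have hcm : cer P ga gb ≤ m := by
    have := Finset.le_sup' (fun π => cer P ga (relabel π gb)) (Finset.mem_univ (1 : Equiv.Perm (Fin n)))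
    simp only [hr1] at this
    exact this
  have hmpos : 0 < m := hpos.trans_le hcm
  have hlogm : Real.log (cer P ga gb) ≤ Real.log m := Real.log_le_log hpos hcm
  have hmsum : m ≤ ∑ π : Equiv.Perm (Fin n), cer P ga (relabel π gb) := by
    refine Finset.sup'_le _ _ fun π hπ => ?_
    exact Finset.single_le_sum (f := fun π => cer P ga (relabel π gb))
      (fun π _ => cer_nonneg hP0 _ _) hπ
  have key : (Cn2 n)⁻¹ * Real.logb 2 m⁻¹ - H2 P
      = (-Real.log m - (n.choose 2 : ℕ) * h) / ((n.choose 2 : ℕ) * Real.log 2) := by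
    rw [hh, Real.logb, Real.log_inv, Cn2]
    field_simp
  rw [key, lt_abs] at hbad
  have hden : 0 < ((n.choose 2 : ℕ) : ℝ) * Real.log 2 := by positivity
  rcases hbad with hb | hb
  · rw [lt_div_iff₀ hden] at hb
    suffices cer P ga gb ≤
      cer (fun x => P x * Real.exp (s1 * (-Real.log (P x) - h - δ * Real.log 2))) ga gb by linarith
    rw [cer_tilt P (fun x => -Real.log (P x) - h - δ * Real.log 2)]
    refine le_mul_of_one_le_right hpos.le (Real.one_le_exp (mul_nonneg hs1.le ?_))
    simp only [Finset.sum_sub_distrib, Finset.sum_neg_distrib, ← hlogc, Finset.sum_const,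
      card_edgePairs, nsmul_eq_mul]
    nlinarith
  · rw [← neg_div, lt_div_iff₀ hden] at hb
    by_cases hc : 0 ≤ ∑ e ∈ edgePairs n, (Real.log (P (ga e, gb e)) + h - δ * Real.log 2 / 2)
    · suffices cer P ga gb ≤
        cer (fun x => P x * Real.exp (s2 * (Real.log (P x) + h - δ * Real.log 2 / 2))) ga gb by
          linarith
      rw [cer_tilt P (fun x => Real.log (P x) + h - δ * Real.log 2 / 2)]
      exact le_mul_of_one_le_right hpos.le (Real.one_le_exp (mul_nonneg hs2.le hc))
    · push Not at hc
      simp only [Finset.sum_sub_distrib, Finset.sum_add_distrib, ← hlogc, Finset.sum_const,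
        card_edgePairs, nsmul_eq_mul] at hc
      suffices cer P ga gb ≤ Real.exp (-(δ * Real.log 2 / 2)) ^ (n.choose 2) * m by
        have := mul_le_mul_of_nonneg_left hmsum
          (show 0 ≤ Real.exp (-(δ * Real.log 2 / 2)) ^ (n.choose 2) by positivity)
        linarith
      rw [← Real.log_le_log_iff hpos (by positivity), Real.log_mul (by positivity) hmpos.ne',
        Real.log_pow, Real.log_exp]
      nlinarith

/-- Under the CER model with fixed per-edge distribution `P_{A,B}`,
`C(n,2)⁻¹ log(1/max_{π ∈ S_n} P(Gₐ, π(G_b)))` converges to `H(A,B)` in probability. -/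
theorem stmt3 {α β : Type*} [Fintype α] [Fintype β]
    (P : α × β → ℝ) (hP0 : ∀ x, 0 ≤ P x) (hP1 : ∑ x, P x = 1) :
    ∀ δ : ℝ, 0 < δ →
      Filter.Tendsto (fun n : ℕ =>
          prob (fun p : Graph n α × Graph n β => cer P p.1 p.2)
            {p : Graph n α × Graph n β |
              δ < |(Cn2 n)⁻¹ *
                  Real.logb 2 (maxPerm fun π => cer P p.1 (relabel π p.2))⁻¹ - H2 P|})
        Filter.atTop (nhds 0) := by
  intro δ hδ
  have hl2 : 0 < Real.log 2 := Real.log_pos (by norm_num)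
  have hδ2 : 0 < δ * Real.log 2 := mul_pos hδ hl2
  obtain ⟨h, hh⟩ : ∃ h, h = H2 P * Real.log 2 := ⟨_, rfl⟩
  have hmean : ∑ x, P x * Real.log (P x) = -h := by
    rw [hh, H2, Finset.sum_mul, ← Finset.sum_neg_distrib]
    refine Finset.sum_congr rfl fun x _ => ?_
    rw [Real.logb, Real.log_inv]
    field_simp
  obtain ⟨s1, hs1, hρ1⟩ := exists_tilt P
    (fun x => -Real.log (P x) - h - δ * Real.log 2) hP1 (by
      simp only [mul_sub, mul_neg, Finset.sum_sub_distrib, Finset.sum_neg_distrib, hmean,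
        ← Finset.sum_mul, hP1]
      linarith)
  obtain ⟨s2, hs2, hρ2⟩ := exists_tilt P
    (fun x => Real.log (P x) + h - δ * Real.log 2 / 2) hP1 (by
      simp only [mul_sub, mul_add, Finset.sum_sub_distrib, Finset.sum_add_distrib, hmean,
        ← Finset.sum_mul, hP1]
      linarith)
  have hρ3 : Real.exp (-(δ * Real.log 2 / 2)) < 1 := by rw [Real.exp_lt_one_iff]; linarith
  set ρ1 := ∑ x, P x * Real.exp (s1 * (-Real.log (P x) - h - δ * Real.log 2)) with hρ1d
  set ρ2 := ∑ x, P x * Real.exp (s2 * (Real.log (P x) + h - δ * Real.log 2 / 2)) with hρ2d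
  set ρ3 := Real.exp (-(δ * Real.log 2 / 2)) with hρ3d
  have p1 : 0 ≤ ρ1 := Finset.sum_nonneg fun x _ => mul_nonneg (hP0 x) (Real.exp_pos _).le
  have p2 : 0 ≤ ρ2 := Finset.sum_nonneg fun x _ => mul_nonneg (hP0 x) (Real.exp_pos _).le
  have p3 : 0 ≤ ρ3 := (Real.exp_pos _).le
  have hlim := ((tendsto_aux (Fintype.card (α × β)) ρ1 p1 hρ1).add
    (tendsto_aux (Fintype.card (α × β)) ρ2 p2 hρ2)).add
    (tendsto_aux (Fintype.card (α × β)) ρ3 p3 hρ3)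
  simp only [add_zero] at hlim
  refine squeeze_zero' (Eventually.of_forall fun n => ?_) ?_ hlim
  · exact Finset.sum_nonneg fun p _ => Set.indicator_nonneg (fun p _ => cer_nonneg hP0 _ _) p
  filter_upwards [eventually_ge_atTop 2] with n hn
  have hb : prob (fun p : Graph n α × Graph n β => cer P p.1 p.2)
            {p : Graph n α × Graph n β |
              δ < |(Cn2 n)⁻¹ *
                  Real.logb 2 (maxPerm fun π => cer P p.1 (relabel π p.2))⁻¹ - H2 P|}
      ≤ ∑ p : Graph n α × Graph n β,
        (cer (fun x => P x * Real.exp (s1 * (-Real.log (P x) - h - δ * Real.log 2))) p.1 p.2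
      + cer (fun x => P x * Real.exp (s2 * (Real.log (P x) + h - δ * Real.log 2 / 2))) p.1 p.2
      + ρ3 ^ (n.choose 2) * ∑ π : Equiv.Perm (Fin n), cer P p.1 (relabel π p.2)) := by
    refine Finset.sum_le_sum fun p _ => ?_
    refine Set.indicator_le' (s := {p : Graph n α × Graph n β |
              δ < |(Cn2 n)⁻¹ *
                  Real.logb 2 (maxPerm fun π => cer P p.1 (relabel π p.2))⁻¹ - H2 P|})
      (g := fun p : Graph n α × Graph n β =>
        (cer (fun x => P x * Real.exp (s1 * (-Real.log (P x) - h - δ * Real.log 2))) p.1 p.2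
      + cer (fun x => P x * Real.exp (s2 * (Real.log (P x) + h - δ * Real.log 2 / 2))) p.1 p.2
      + ρ3 ^ (n.choose 2) * ∑ π : Equiv.Perm (Fin n), cer P p.1 (relabel π p.2)))
      (fun p hp => pointwise hn P hP0 δ h s1 s2 hh hs1 hs2 p.1 p.2 hp) (fun p _ => ?_) p
    refine add_nonneg (add_nonneg ?_ ?_) (mul_nonneg (by positivity)
      (Finset.sum_nonneg fun _ _ => cer_nonneg hP0 _ _))
    · exact cer_nonneg (fun x => mul_nonneg (hP0 x) (Real.exp_pos _).le) _ _
    · exact cer_nonneg (fun x => mul_nonneg (hP0 x) (Real.exp_pos _).le) _ _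
  refine hb.trans ?_
  rw [Finset.sum_add_distrib, Finset.sum_add_distrib, sum_cer, sum_cer, ← Finset.mul_sum,
    Finset.sum_comm]
  simp only [sum_cer_relabel, hP1, one_pow, one_mul, Finset.sum_const, Finset.card_univ,
    Fintype.card_perm, Fintype.card_fin, nsmul_eq_mul]
  rw [← hρ1d, ← hρ2d]
  have hfac : (1:ℝ) ≤ n.factorial := by exact_mod_cast Nat.factorial_pos n
  have hK : (0:ℝ) ≤ (Fintype.card (α × β) : ℝ) ^ n := by positivity
  have q1 := mul_le_mul_of_nonneg_left hfac (mul_nonneg hK (pow_nonneg p1 (n.choose 2)))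
  have q2 := mul_le_mul_of_nonneg_left hfac (mul_nonneg hK (pow_nonneg p2 (n.choose 2)))
  nlinarith

end GraphSI
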